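/- Let T > 0, (Ω, ℱ, P) a complete probability space with filtration 𝔽 = (ℱ_t)_{t∈[0,T]}, λ Lebesgue measure on [0,T], 𝒢 := {A ∈ ℬ([0,T])⊗ℱ : A_t ∈ ℱ_t for every t ∈ [0,T]}, and ([0,T]×Ω, 𝒢*, μ*) the completion of ([0,T]×Ω, 𝒢, λ×P). Let U ⊆ R^l be a nonempty closed set, ū a 𝒢*-measurable, μ*-square-integrable function with ū(t,ω) ∈ U μ*-a.e., and F : [0,T]×Ω → R^l a ℬ([0,T])⊗ℱ-measurable, 𝔽-adapted process. Then the set 𝒜_ū := {(t,ω) ∈ [0,T]×Ω : ⟨F(t,ω), v⟩ ≥ 0 for all v ∈ T_U(ū(t,ω))} belongs to 𝒢*. -/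

import Mathlib

/-!
The upper limit of `dist (x + h v, K) / h` as `h → 0⁺`, as a function of `(x, v)`, vanishes exactly
when `v` is in the adjacent cone of `K` at `x`. It is Borel in `x`, because a supremum of continuous
functions over any set of `h`, countable or not, is lower semicontinuous, and it is `1`-Lipschitz
in `v`. For a function measurable in `x` and continuous in `v`, its infimum over a compact set of
`v` is attained and equals its infimum over a countable dense subset. Hence the existence of a
`v ∈ T_K(x)` with `⟪f, v⟫ < 0`, a priori only an analytic condition on `(f, x)`, is a Borel one, and
the complement of the set in question is the preimage of a Borel set under a function measurable for
the completion.
-/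

open MeasureTheory Filter Set
open scoped ENNReal RealInnerProductSpace

/-- The adjacent cone of a set `K` at a point `x`:
`T_K(x) := {v : lim_{h→0⁺} dist(x+hv, K)/h = 0}`. -/
def adjacentCone {X : Type*} [NormedAddCommGroup X] [NormedSpace ℝ X]
    (K : Set X) (x : X) : Set X :=
  {v | Tendsto (fun h : ℝ => Metric.infDist (x + h • v) K / h)
        (nhdsWithin 0 (Set.Ioi 0)) (nhds 0)}

/-- The progressive σ-algebra
`𝒢 := {A ∈ ℬ([0,T]) ⊗ ℱ : A_t ∈ ℱ_t for every t ∈ [0,T]}` on `[0,T] × Ω`. -/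
def progSigma (T : ℝ) (Ω : Type*) [mΩ : MeasurableSpace Ω]
    (F : ℝ → MeasurableSpace Ω) : MeasurableSpace (Set.Icc (0 : ℝ) T × Ω) where
  MeasurableSet' A := MeasurableSet A ∧
    ∀ t : Set.Icc (0 : ℝ) T, MeasurableSet[F t.1] {ω : Ω | (t, ω) ∈ A}
  measurableSet_empty :=
    ⟨MeasurableSet.empty, fun t => by simp⟩
  measurableSet_compl := fun A hA =>
    ⟨hA.1.compl, fun t => by
      have : {ω : Ω | (t, ω) ∈ Aᶜ} = {ω : Ω | (t, ω) ∈ A}ᶜ := rfl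
      rw [this]; exact (hA.2 t).compl⟩
  measurableSet_iUnion := fun s hs =>
    ⟨MeasurableSet.iUnion fun n => (hs n).1, fun t => by
      have : {ω : Ω | (t, ω) ∈ ⋃ n, s n} = ⋃ n, {ω : Ω | (t, ω) ∈ s n} := by
        ext ω; simp
      rw [this]; exact MeasurableSet.iUnion fun n => (hs n).2 t⟩

lemma progSigma_le (T : ℝ) (Ω : Type*) [mΩ : MeasurableSpace Ω]
    (F : ℝ → MeasurableSpace Ω) :
    progSigma T Ω F ≤ (inferInstance : MeasurableSpace (Set.Icc (0 : ℝ) T × Ω)) :=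
  fun _ hA => hA.1

/-- Lebesgue measure on `[0, T]`, viewed as a subtype of `ℝ`. -/
noncomputable def lebIcc (T : ℝ) : Measure (Set.Icc (0 : ℝ) T) :=
  Measure.comap Subtype.val volume

/-- The measure `λ × P`, regarded as a measure on the progressive σ-algebra `𝒢`. -/
noncomputable def nuG (T : ℝ) (Ω : Type*) [mΩ : MeasurableSpace Ω]
    (F : ℝ → MeasurableSpace Ω) (P : Measure Ω) :
    @Measure (Set.Icc (0 : ℝ) T × Ω) (progSigma T Ω F) :=
  ((lebIcc T).prod P).trim (progSigma_le T Ω F)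

/-- The completion `𝒮*` of a σ-algebra `𝒮` under a measure `μ`: all sets `A` with
`E ⊆ A ⊆ F`, `E, F ∈ 𝒮` and `μ(F \ E) = 0`. -/
def completionSets {α : Type*} (m : MeasurableSpace α) (μ : @Measure α m) :
    Set (Set α) :=
  {A : Set α | ∃ E F : Set α, MeasurableSet[m] E ∧ MeasurableSet[m] F ∧
    E ⊆ A ∧ A ⊆ F ∧ μ (F \ E) = 0}

/-- A function on `[0,T] × Ω` is `𝒢*`-measurable if preimages of Borel sets belong to
the completion `𝒢*` of `𝒢` under `λ × P`. -/
def starMeasurable (T : ℝ) (Ω : Type*) [mΩ : MeasurableSpace Ω]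
    (F : ℝ → MeasurableSpace Ω) (P : Measure Ω) {l : ℕ}
    (u : Set.Icc (0 : ℝ) T × Ω → EuclideanSpace ℝ (Fin l)) : Prop :=
  ∀ B : Set (EuclideanSpace ℝ (Fin l)), MeasurableSet B →
    u ⁻¹' B ∈ completionSets (progSigma T Ω F) (nuG T Ω F P)

/-- The space `ℒ²_𝔽(0,T;ℝ^l)` of `𝒢*`-measurable, `μ*`-square-integrable functions. -/
def L2Star (T : ℝ) (Ω : Type*) [mΩ : MeasurableSpace Ω]
    (F : ℝ → MeasurableSpace Ω) (P : Measure Ω) (l : ℕ) :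
    Set (Set.Icc (0 : ℝ) T × Ω → EuclideanSpace ℝ (Fin l)) :=
  {v | starMeasurable T Ω F P v ∧ eLpNorm v 2 (nuG T Ω F P) < ⊤}

/-- The admissible set `𝒰*_ad := {u ∈ ℒ²_𝔽 : u(t,ω) ∈ U, μ*-a.e.}`. -/
def UadStar (T : ℝ) (Ω : Type*) [mΩ : MeasurableSpace Ω]
    (F : ℝ → MeasurableSpace Ω) (P : Measure Ω) {l : ℕ}
    (U : Set (EuclideanSpace ℝ (Fin l))) :
    Set (Set.Icc (0 : ℝ) T × Ω → EuclideanSpace ℝ (Fin l)) :=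
  {u ∈ L2Star T Ω F P l | ∀ᵐ p ∂(nuG T Ω F P), u p ∈ U}

/-- The adjacent cone, at `u`, of a subset `S` of a function space `W`, with respect
to the `L²(μ)`-distance: `{v ∈ W : lim_{h→0⁺} dist_{L²}(u + h v, S)/h = 0}`. -/
def adjacentConeL2 {α E : Type*} {mα : MeasurableSpace α} (μ : Measure α)
    [NormedAddCommGroup E] [NormedSpace ℝ E]
    (W S : Set (α → E)) (u : α → E) : Set (α → E) :=
  {v ∈ W | Tendsto
    (fun h : ℝ =>
      (⨅ g ∈ S, eLpNorm (fun p => (u p + h • v p) - g p) 2 μ) / ENNReal.ofReal h)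
    (nhdsWithin 0 (Set.Ioi 0)) (nhds 0)}

section Measurability

variable {ι α X β : Type*} [MeasurableSpace α] [MeasurableSpace β] [TopologicalSpace β]

lemma measurable_limsup_of_lowerSemicontinuous [TopologicalSpace α] [OpensMeasurableSpace α]
    [CompleteLinearOrder β] [OrderTopology β] [SecondCountableTopology β] [BorelSpace β]
    {f : ι → α → β} (hf : ∀ i, LowerSemicontinuous (f i)) (L : Filter ι) [L.IsCountablyGenerated] :
    Measurable fun a => limsup (fun i => f i a) L := by
  obtain ⟨s, hs⟩ := L.exists_antitone_basis
  simp only [hs.toHasBasis.limsup_eq_iInf_iSup, iInf_true]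
  exact .iInf fun n => (lowerSemicontinuous_biSup fun i _ => hf i).measurable

variable [TopologicalSpace X] [ConditionallyCompleteLinearOrder β] [OrderTopology β]
  [SecondCountableTopology β] [BorelSpace β] {g : α → X → β}

lemma measurableSet_exists_le_of_compactSpace [CompactSpace X] [TopologicalSpace.SeparableSpace X]
    (hmeas : ∀ x, Measurable (g · x)) (hcont : ∀ a, Continuous (g a)) (c : β) :
    MeasurableSet {a | ∃ x, g a x ≤ c} := by
  cases isEmpty_or_nonempty X
  · simp
  obtain ⟨s, hs, hdense⟩ := TopologicalSpace.exists_countable_dense X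
  have : Countable s := hs
  have exists_le_iff (a : α) : (∃ x, g a x ≤ c) ↔ ⨅ x : s, g a x ≤ c := by
    rw [hdense.ciInf' (hcont a)]
    obtain ⟨x₀, -, hx₀⟩ := isCompact_univ.exists_sInf_image_eq univ_nonempty (hcont a).continuousOn
    have hbdd : BddBelow (range (g a)) := (isCompact_range (hcont a)).bddBelow
    rw [image_univ, sInf_range] at hx₀
    exact ⟨fun ⟨x, hx⟩ => (ciInf_le hbdd x).trans hx, fun h => ⟨x₀, hx₀ ▸ h⟩⟩
  simp only [exists_le_iff]
  exact measurableSet_le (.iInf fun x => hmeas x) measurable_const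

lemma measurableSet_exists_le [SecondCountableTopology X] [SigmaCompactSpace X]
    (hmeas : ∀ x, Measurable (g · x)) (hcont : ∀ a, Continuous (g a)) (c : β) :
    MeasurableSet {a | ∃ x, g a x ≤ c} := by
  have cover : {a | ∃ x, g a x ≤ c} = ⋃ n, {a | ∃ x : compactCovering X n, g a x ≤ c} := by
    ext a
    simp only [mem_ofPred_eq, mem_iUnion, Subtype.exists, exists_prop]
    refine ⟨fun ⟨x, hx⟩ => ?_, fun ⟨_, x, _, hx⟩ => ⟨x, hx⟩⟩
    obtain ⟨n, hn⟩ := exists_mem_compactCovering x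
    exact ⟨n, x, hn, hx⟩
  rw [cover]
  refine .iUnion fun n => ?_
  have : CompactSpace (compactCovering X n) :=
    isCompact_iff_compactSpace.1 (isCompact_compactCovering X n)
  exact measurableSet_exists_le_of_compactSpace (X := compactCovering X n) (fun x => hmeas x)
    (fun a => (hcont a).comp continuous_subtype_val) c

end Measurability

section AdjacentCone

variable {X : Type*} [NormedAddCommGroup X] [NormedSpace ℝ X]

/-- The upper right Dini derivative at `h = 0` of `h ↦ dist (x + h v, K)`, for `x` in the closure
of `K`. It takes values in `[0, ∞]`, so that it is a genuine upper limit for all `x`. -/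
noncomputable def upperDistSlope (K : Set X) (x v : X) : ℝ≥0∞ :=
  limsup (fun h : ℝ => ‖Metric.infDist (x + h • v) K / h‖ₑ) (nhdsWithin 0 (Ioi 0))

lemma mem_adjacentCone_iff_upperDistSlope_eq_zero (K : Set X) (x v : X) :
    v ∈ adjacentCone K x ↔ upperDistSlope K x v = 0 := by
  rw [adjacentCone, mem_ofPred_eq, tendsto_zero_iff_enorm_tendsto_zero]
  exact ⟨Tendsto.limsup_eq, fun h => tendsto_of_le_liminf_of_limsup_le zero_le h.le⟩

lemma measurable_upperDistSlope [MeasurableSpace X] [OpensMeasurableSpace X] (K : Set X) (v : X) :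
    Measurable (upperDistSlope K · v) := by
  refine measurable_limsup_of_lowerSemicontinuous (fun h => Continuous.lowerSemicontinuous ?_) _
  exact (((Metric.continuous_infDist_pt K).comp (continuous_add_const (h • v))).div_const h).enorm

lemma enorm_infDist_div_le (K : Set X) (x v w : X) {h : ℝ} (hh : 0 < h) :
    ‖Metric.infDist (x + h • v) K / h‖ₑ ≤
      ‖Metric.infDist (x + h • w) K / h‖ₑ + edist v w := by
  have hdist : dist (x + h • v) (x + h • w) = dist v w * h := by
    rw [dist_add_left, dist_smul₀, Real.norm_of_nonneg hh.le, mul_comm]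
  have hnonneg (y : X) : 0 ≤ Metric.infDist y K / h := div_nonneg Metric.infDist_nonneg hh.le
  rw [Real.enorm_of_nonneg (hnonneg _), Real.enorm_of_nonneg (hnonneg _), edist_dist,
    ← ENNReal.ofReal_add (hnonneg _) dist_nonneg]
  refine ENNReal.ofReal_le_ofReal ?_
  rw [div_add' _ _ _ hh.ne', ← hdist]
  gcongr
  exact Metric.infDist_le_infDist_add_dist

lemma upperDistSlope_le_add_edist (K : Set X) (x v w : X) :
    upperDistSlope K x v ≤ upperDistSlope K x w + edist v w := by
  calc upperDistSlope K x v
      ≤ limsup (fun h : ℝ => ‖Metric.infDist (x + h • w) K / h‖ₑ + edist v w)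
          (nhdsWithin 0 (Ioi 0)) :=
        limsup_le_limsup (eventually_mem_nhdsWithin.mono fun _ => enorm_infDist_div_le K x v w)
    _ = upperDistSlope K x w + edist v w :=
        limsup_add_const _ _ _ (by isBoundedDefault) (by isBoundedDefault)

lemma continuous_upperDistSlope (K : Set X) (x : X) : Continuous (upperDistSlope K x) :=
  continuous_of_le_add_edist 1 ENNReal.one_ne_top fun v w => by
    simpa only [one_mul] using upperDistSlope_le_add_edist K x v w

end AdjacentCone

lemma measurableSet_exists_mem_adjacentCone_inner_neg {E : Type*} [NormedAddCommGroup E]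
    [InnerProductSpace ℝ E] [ProperSpace E] [MeasurableSpace E] [BorelSpace E] (K : Set E) :
    MeasurableSet {p : E × E | ∃ v ∈ adjacentCone K p.2, ⟪p.1, v⟫ < 0} := by
  let g (n : ℕ) (p : E × E) (v : E) : ℝ≥0∞ :=
    max (upperDistSlope K p.2 v) (ENNReal.ofReal (⟪p.1, v⟫ + 1 / (n + 1)))
  have neg_iff (r : ℝ) : r < 0 ↔ ∃ n : ℕ, r + 1 / (n + 1) ≤ 0 := by
    refine ⟨fun hr => ?_, fun ⟨n, hn⟩ => ?_⟩
    · obtain ⟨n, hn⟩ := exists_nat_one_div_lt (neg_pos.2 hr)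
      exact ⟨n, by linarith⟩
    · linarith [Nat.one_div_pos_of_nat (α := ℝ) (n := n)]
  have eq_iUnion : {p : E × E | ∃ v ∈ adjacentCone K p.2, ⟪p.1, v⟫ < 0} =
      ⋃ n, {p | ∃ v, g n p v ≤ 0} := by
    ext p
    simp only [mem_ofPred_eq, mem_iUnion, g, nonpos_iff_eq_zero, max_eq_zero,
      ENNReal.ofReal_eq_zero, mem_adjacentCone_iff_upperDistSlope_eq_zero, neg_iff]
    rw [exists_comm]
    simp only [exists_and_left]
  rw [eq_iUnion]
  refine .iUnion fun n => measurableSet_exists_le (fun v => ?_) (fun p => ?_) 0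
  · exact ((measurable_upperDistSlope K v).comp measurable_snd).max (by fun_prop)
  · exact (continuous_upperDistSlope K p.2).max (ENNReal.continuous_ofReal.comp (by fun_prop))

lemma mem_completionSets_iff_nullMeasurableSet {α : Type*} {m : MeasurableSpace α} {μ : Measure α}
    {A : Set α} : A ∈ completionSets m μ ↔ NullMeasurableSet A μ := by
  constructor
  · rintro ⟨E, G, hE, -, hEA, hAG, hnull⟩
    refine hE.nullMeasurableSet.congr (hEA.eventuallyLE.antisymm ?_)
    exact ae_le_set.2 (measure_mono_null (sdiff_subset_sdiff_left hAG) hnull)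
  · intro hA
    obtain ⟨E, hEA, hE, hE_ae⟩ := hA.exists_measurable_subset_ae_eq
    obtain ⟨G, hAG, hG, hG_ae⟩ := hA.exists_measurable_superset_ae_eq
    exact ⟨E, G, hE, hG, hEA, hAG, ae_le_set.1 (hG_ae.trans hE_ae.symm).le⟩

lemma measurable_progSigma {T : ℝ} {Ω β : Type*} [MeasurableSpace Ω] [MeasurableSpace β]
    {F : ℝ → MeasurableSpace Ω} {f : Icc (0 : ℝ) T × Ω → β} (hf : Measurable f)
    (hadapted : ∀ t : Icc (0 : ℝ) T, Measurable[F t.1] fun ω => f (t, ω)) :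
    Measurable[progSigma T Ω F] f :=
  fun _ hB => ⟨hf hB, fun t => hadapted t hB⟩

lemma starMeasurable.aemeasurable {T : ℝ} {Ω : Type*} [MeasurableSpace Ω]
    {F : ℝ → MeasurableSpace Ω} {P : Measure Ω} {l : ℕ}
    {u : Icc (0 : ℝ) T × Ω → EuclideanSpace ℝ (Fin l)} (hu : starMeasurable T Ω F P u) :
    AEMeasurable u (nuG T Ω F P) :=
  NullMeasurable.aemeasurable fun B hB => mem_completionSets_iff_nullMeasurableSet.1 (hu B hB)

theorem goodSet_mem_completion_general {α E : Type*} {m : MeasurableSpace α} {μ : Measure α}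
    [NormedAddCommGroup E] [InnerProductSpace ℝ E] [ProperSpace E] [MeasurableSpace E]
    [BorelSpace E] (K : Set E) {f u : α → E} (hf : AEMeasurable f μ) (hu : AEMeasurable u μ) :
    {a | ∀ v ∈ adjacentCone K (u a), 0 ≤ ⟪f a, v⟫} ∈ completionSets m μ := by
  rw [mem_completionSets_iff_nullMeasurableSet]
  have hpair : NullMeasurable (fun a => (f a, u a)) μ := (hf.prodMk hu).nullMeasurable
  have hbad : NullMeasurableSet {a | ∃ v ∈ adjacentCone K (u a), ⟪f a, v⟫ < 0} μ :=
    hpair (measurableSet_exists_mem_adjacentCone_inner_neg K)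
  simpa only [compl_ofPred, not_exists, not_and, not_lt] using hbad.compl

/-- The set `𝒜_ū := {(t,ω) : ⟨F(t,ω), v⟩ ≥ 0 for all v ∈ T_U(ū(t,ω))}` belongs to the
completion `𝒢*` of the progressive σ-algebra `𝒢` under `λ × P`. -/
theorem goodSet_mem_completion
    (T : ℝ) (hT : 0 < T) {Ω : Type*} [mΩ : MeasurableSpace Ω]
    (P : Measure Ω) [IsProbabilityMeasure P] (hPc : P.IsComplete)
    (F : ℝ → MeasurableSpace Ω)
    (hFle : ∀ t : ℝ, F t ≤ mΩ)
    (hFmono : ∀ s t : ℝ, s ≤ t → F s ≤ F t)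
    {l : ℕ} (U : Set (EuclideanSpace ℝ (Fin l))) (hUcl : IsClosed U)
    (hUne : U.Nonempty)
    (ubar : Set.Icc (0 : ℝ) T × Ω → EuclideanSpace ℝ (Fin l))
    (hubarMeas : starMeasurable T Ω F P ubar)
    (hubarInt : eLpNorm ubar 2 (nuG T Ω F P) < ⊤)
    (hubarU : ∀ᵐ p ∂(nuG T Ω F P), ubar p ∈ U)
    (Ff : Set.Icc (0 : ℝ) T × Ω → EuclideanSpace ℝ (Fin l))
    (hFfmeas : Measurable Ff)
    (hFfadapted : ∀ t : Set.Icc (0 : ℝ) T,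
      Measurable[F t.1] fun ω : Ω => Ff (t, ω)) :
    {p : Set.Icc (0 : ℝ) T × Ω | ∀ v ∈ adjacentCone U (ubar p), 0 ≤ ⟪Ff p, v⟫} ∈
      completionSets (progSigma T Ω F) (nuG T Ω F P) :=
  goodSet_mem_completion_general U (measurable_progSigma hFfmeas hFfadapted).aemeasurable
    hubarMeas.aemeasurable
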